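/- arXiv:2207.12704 — 2 statements merged into one kernel-verified Lean document; each statement's English description precedes it below -/
import Mathlib

section
/- Let A be a set with a length function μ and let 𝐰 = a₁(r₁)⋯a_k(r_k) be a word in the alphabet {a(r) : a ∈ A, r ∈ ℝ} representing w ∈ F_ℝ(A). Then ψ_{1/t}(𝐰[t]) converges to w as t → ∞ in the pseudometric of F_ℝ(A); that is, ‖w⁻¹·ψ_{1/t}(𝐰[t])‖_{F_ℝ(A;μ)} → 0 as t → ∞. -/
/-!
Truncating `a(r)` at scale `t` and rescaling by `1/t` gives `a(s)` with `s = ⟦t r⟧ / t` and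
`|s - r| ≤ 1/t`. If two words of the same shape, `w = ∏ aᵢ(rᵢ)` and `v = ∏ aᵢ(sᵢ)`, are compared
letter by letter, then `w⁻¹ v` is a product of conjugates of the elements `aᵢ(sᵢ - rᵢ)`
(`sum_mem_wordNormSet`), so conjugation invariance gives `‖w⁻¹ v‖ ≤ ∑ |sᵢ - rᵢ| μ(aᵢ)`. Here the
right-hand side is at most `(∑ μ(aᵢ)) / t`, which tends to `0`.
-/

open Filter

/-- The set of total lengths of expressions of `g` as a product of conjugates
of generators `gen i ^ {±1}`, each weighted by the length function `ℓ`. -/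
def wordNormSet {G : Type*} [Group G] {I : Type*}
    (gen : I → G) (ℓ : I → ℝ) (g : G) : Set ℝ :=
  { x | ∃ l : List (G × I × Bool),
      g = (l.map fun p => p.1 * (if p.2.2 then gen p.2.1 else (gen p.2.1)⁻¹) * p.1⁻¹).prod ∧
      x = (l.map fun p => ℓ p.2.1).sum }

/-- The conjugation-invariant word norm associated to a length function. -/
noncomputable def wordNorm {G : Type*} [Group G] {I : Type*}
    (gen : I → G) (ℓ : I → ℝ) (g : G) : ℝ :=
  sInf (wordNormSet gen ℓ g)

/-- `F_ℝ(A)`: the free product of copies of `ℝ` indexed by `A`. -/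
abbrev FR (A : Type*) : Type _ := Monoid.CoprodI (fun _ : A => Multiplicative ℝ)

/-- The generator `a(r)` of `F_ℝ(A)`. -/
def genFR (A : Type*) (p : A × ℝ) : FR A :=
  Monoid.CoprodI.of (i := p.1) (Multiplicative.ofAdd p.2)

/-- The conjugation-invariant word norm `‖·‖_{F_ℝ(A;μ)}`. -/
noncomputable def FRnorm {A : Type*} (μ : A → ℝ) : FR A → ℝ :=
  wordNorm (genFR A) (fun p => |p.2| * μ p.1)

/-- Multiplication by `t` as an endomorphism of the group `Multiplicative ℝ`. -/
def scaleHom (t : ℝ) : Multiplicative ℝ →* Multiplicative ℝ where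
  toFun x := Multiplicative.ofAdd (t * Multiplicative.toAdd x)
  map_one' := by simp
  map_mul' x y := by simp [toAdd_mul, mul_add, ofAdd_add]

/-- The endomorphism `ψ_t` of `F_ℝ(A)` determined by `ψ_t(a(r)) = a(tr)`. -/
noncomputable def psiT {A : Type*} (t : ℝ) : FR A →* FR A :=
  Monoid.CoprodI.lift (fun a =>
    (Monoid.CoprodI.of (M := fun _ : A => Multiplicative ℝ) (i := a)).comp (scaleHom t))

/-- `⟦x⟧`: the floor of `x` for `x ≥ 0`, the ceiling of `x` for `x ≤ 0`. -/
noncomputable def myfloor (x : ℝ) : ℤ := if 0 ≤ x then ⌊x⌋ else ⌈x⌉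

/-- The element of `F_ℝ(A)` represented by the word `𝐰 = a₁(r₁)⋯a_k(r_k)`. -/
def wordProd {A : Type*} (l : List (A × ℝ)) : FR A :=
  (l.map (genFR A)).prod

/-- The truncation `𝐰[t] = a₁^{⟦t r₁⟧} ⋯ a_k^{⟦t r_k⟧} ∈ F(A)`, viewed inside
`F_ℝ(A)` via `a ↦ a(1)` (so `a^{m}` corresponds to `a(m)`). -/
noncomputable def truncProd {A : Type*} (l : List (A × ℝ)) (t : ℝ) : FR A :=
  (l.map fun p => genFR A (p.1, ((myfloor (t * p.2) : ℤ) : ℝ))).prod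

theorem abs_myfloor_sub_le (x : ℝ) : |(myfloor x : ℝ) - x| ≤ 1 := by
  unfold myfloor
  split_ifs
  · rw [abs_le]
    constructor <;> linarith [Int.floor_le x, Int.lt_floor_add_one x]
  · rw [abs_le]
    constructor <;> linarith [Int.le_ceil x, Int.ceil_lt_add_one x]

theorem psiT_genFR {A : Type*} (t : ℝ) (p : A × ℝ) :
    psiT t (genFR A p) = genFR A (p.1, t * p.2) := by
  simp [psiT, genFR, scaleHom]

theorem genFR_inv_mul {A : Type*} (a : A) (r s : ℝ) :
    (genFR A (a, r))⁻¹ * genFR A (a, s) = genFR A (a, s - r) := by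
  simp only [genFR]
  rw [← map_inv, ← map_mul, ← ofAdd_neg, ← ofAdd_add, neg_add_eq_sub]

/-- Changing the exponents of a word from `r` to `f (a, r)`, letter by letter, costs at most the
sum of the lengths of the changes. If `w = g w'` and `v = h v'` are the original and the changed
word, split at their first letters, then `w⁻¹ v = (w'⁻¹ (g⁻¹ h) w') (w'⁻¹ v')`, so each letter
contributes one conjugate of a generator. -/
theorem sum_mem_wordNormSet {A : Type*} (μ : A → ℝ) (f : A × ℝ → ℝ) (l : List (A × ℝ)) :
    (l.map fun p => |f p - p.2| * μ p.1).sum ∈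
      wordNormSet (genFR A) (fun p => |p.2| * μ p.1)
        ((wordProd l)⁻¹ * (l.map fun p => genFR A (p.1, f p)).prod) := by
  induction l with
  | nil => exact ⟨[], by simp [wordProd], by simp⟩
  | cons p l ih =>
    obtain ⟨L, hL, hx⟩ := ih
    refine ⟨((wordProd l)⁻¹, (p.1, f p - p.2), true) :: L, ?_, ?_⟩
    · have hw : wordProd (p :: l) = genFR A (p.1, p.2) * wordProd l := by simp [wordProd]
      rw [List.map_cons, List.prod_cons, List.map_cons, List.prod_cons, ← hL, hw]
      simp only [if_true, ← genFR_inv_mul]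
      group
    · rw [List.map_cons, List.sum_cons, List.map_cons, List.sum_cons, hx]

theorem wordNormSet_nonneg {A : Type*} {μ : A → ℝ} (hμ : ∀ a, 0 ≤ μ a) (g : FR A) :
    ∀ x ∈ wordNormSet (genFR A) (fun p => |p.2| * μ p.1) g, 0 ≤ x := by
  rintro x ⟨L, -, rfl⟩
  apply List.sum_nonneg
  intro y hy
  obtain ⟨q, -, rfl⟩ := List.mem_map.1 hy
  exact mul_nonneg (abs_nonneg _) (hμ _)

theorem FRnorm_trunc_le {A : Type*} {μ : A → ℝ} (hμ : ∀ a, 0 ≤ μ a) (l : List (A × ℝ))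
    {t : ℝ} (ht : 0 < t) :
    FRnorm μ ((wordProd l)⁻¹ * psiT (1 / t) (truncProd l t)) ≤
      t⁻¹ * (l.map fun p => μ p.1).sum := by
  have hpsi : psiT (1 / t) (truncProd l t) =
      (l.map fun p => genFR A (p.1, 1 / t * (myfloor (t * p.2) : ℝ))).prod := by
    simp only [truncProd, map_list_prod, List.map_map, Function.comp_def, psiT_genFR]
  rw [hpsi]
  refine (csInf_le ⟨0, fun x hx => wordNormSet_nonneg hμ _ x hx⟩
    (sum_mem_wordNormSet μ (fun p => 1 / t * (myfloor (t * p.2) : ℝ)) l)).trans ?_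
  rw [← List.sum_map_mul_left]
  refine List.sum_le_sum fun p _ => mul_le_mul_of_nonneg_right ?_ (hμ _)
  have h : 1 / t * (myfloor (t * p.2) : ℝ) - p.2 =
      t⁻¹ * ((myfloor (t * p.2) : ℝ) - t * p.2) := by
    field_simp
  rw [h, abs_mul, abs_of_pos (inv_pos.2 ht)]
  exact mul_le_of_le_one_right (inv_pos.2 ht).le (abs_myfloor_sub_le _)

/-- for a word `𝐰 = a₁(r₁)⋯a_k(r_k)` representing `w ∈ F_ℝ(A)`,
`ψ_{1/t}(𝐰[t]) → w` as `t → ∞`, i.e. `‖w⁻¹ · ψ_{1/t}(𝐰[t])‖_{F_ℝ(A;μ)} → 0`. -/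
theorem psiT_trunc_tendsto
    {A : Type*} (μ : A → ℝ) (hμ : ∀ a, 0 ≤ μ a) (l : List (A × ℝ)) :
    Tendsto (fun t : ℝ => FRnorm μ ((wordProd l)⁻¹ * psiT (1 / t) (truncProd l t)))
      atTop (nhds 0) := by
  have hlim : Tendsto (fun t : ℝ => t⁻¹ * (l.map fun p => μ p.1).sum) atTop (nhds 0) := by
    simpa using tendsto_inv_atTop_zero.mul_const (l.map fun p => μ p.1).sum
  refine squeeze_zero' (Eventually.of_forall fun t => Real.sInf_nonneg (wordNormSet_nonneg hμ _))
    ?_ hlim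
  filter_upwards [eventually_gt_atTop 0] with t ht using FRnorm_trunc_le hμ l ht
end

section
/- Let A be a set with a length function μ. For any w ∈ F_ℝ(A) and any word 𝐰 in the alphabet {a(r) : a ∈ A, r ∈ ℝ} representing it, ‖w‖_{F_ℝ(A;μ)} = lim_{t→∞} (1/t)·‖𝐰[t]‖_{F(A;μ)}. -/
/-!
The two inequalities come from two ways of comparing `F_ℝ(A)` with `F(A)`.

*Lower bound.* For `t > 0` the homomorphism `F(A) → F_ℝ(A)`, `a ↦ a(1/t)`, scales lengths by `1/t`.
It sends `𝐰[t]` to `∏ aᵢ(⟦t rᵢ⟧/t)`, which is within `K/t` of `w` (`rescale_trunc_near`). Hence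
`‖w‖ ≤ (1/t)‖𝐰[t]‖ + K/t`.

*Upper bound.* The functions `ℝ → F(A)` of bounded norm form a normal subgroup `boundedSubgroup μ`
of the group of all functions. Since `⟦·⟧` is additive up to a bounded error,
`a(r) ↦ (t ↦ a^⟦t r⟧)` defines a homomorphism `asympHom` from `F_ℝ(A)` to the quotient, and it sends
`w` to the class of `t ↦ 𝐰[t]`. An expression of `w` as a product of conjugates of generators of
total length `x` gives another representative of that class, whose norm at `t` is at most `t x`
(`exists_rep_of_mem`). Hence `‖𝐰[t]‖ ≤ t x + C` with `C` independent of `t`.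
-/

open Filter

/-- The truncation `𝐰[t] = a₁^{⟦t r₁⟧} ⋯ a_k^{⟦t r_k⟧}` as an element of the
free group `F(A)`. -/
noncomputable def truncFG {A : Type*} (l : List (A × ℝ)) (t : ℝ) : FreeGroup A :=
  (l.map fun p => FreeGroup.of p.1 ^ (myfloor (t * p.2))).prod

/-! ### Closure properties of `wordNormSet` -/

section WordNormSet

variable {G : Type*} [Group G] {I : Type*} {gen : I → G} {ℓ : I → ℝ}

lemma wordNormSet_one : (0 : ℝ) ∈ wordNormSet gen ℓ 1 := ⟨[], by simp, by simp⟩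

lemma wordNormSet_mul {g h : G} {x y : ℝ} (hx : x ∈ wordNormSet gen ℓ g)
    (hy : y ∈ wordNormSet gen ℓ h) : x + y ∈ wordNormSet gen ℓ (g * h) := by
  obtain ⟨l, rfl, rfl⟩ := hx
  obtain ⟨m, rfl, rfl⟩ := hy
  exact ⟨l ++ m, by simp, by simp⟩

lemma wordNormSet_gen (i : I) : ℓ i ∈ wordNormSet gen ℓ (gen i) :=
  ⟨[(1, i, true)], by simp, by simp⟩

lemma wordNormSet_gen_inv (i : I) : ℓ i ∈ wordNormSet gen ℓ (gen i)⁻¹ :=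
  ⟨[(1, i, false)], by simp, by simp⟩

lemma wordNormSet_conj {g : G} {x : ℝ} (k : G) (hx : x ∈ wordNormSet gen ℓ g) :
    x ∈ wordNormSet gen ℓ (k * g * k⁻¹) := by
  obtain ⟨l, rfl, rfl⟩ := hx
  induction l with
  | nil => simpa using wordNormSet_one
  | cons p l ih =>
    have h1 : ℓ p.2.1 ∈ wordNormSet gen ℓ
        (k * (p.1 * (if p.2.2 then gen p.2.1 else (gen p.2.1)⁻¹) * p.1⁻¹) * k⁻¹) :=
      ⟨[(k * p.1, p.2)], by simp [mul_assoc], by simp⟩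
    have h2 := wordNormSet_mul h1 ih
    rw [conj_mul] at h2
    simpa only [List.map_cons, List.prod_cons, List.sum_cons] using h2

lemma wordNormSet_inv {g : G} {x : ℝ} (hx : x ∈ wordNormSet gen ℓ g) :
    x ∈ wordNormSet gen ℓ g⁻¹ := by
  obtain ⟨l, rfl, rfl⟩ := hx
  induction l with
  | nil => simpa using wordNormSet_one
  | cons p l ih =>
    have h1 : ℓ p.2.1 ∈ wordNormSet gen ℓ
        (p.1 * (if p.2.2 then gen p.2.1 else (gen p.2.1)⁻¹) * p.1⁻¹)⁻¹ :=
      ⟨[(p.1, p.2.1, !p.2.2)], by cases p.2.2 <;> simp [mul_assoc], by simp⟩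
    have h2 := wordNormSet_mul ih h1
    rw [← mul_inv_rev, add_comm] at h2
    simpa only [List.map_cons, List.prod_cons, List.sum_cons] using h2

lemma wordNormSet_nonneg_s12 (hℓ : ∀ i, 0 ≤ ℓ i) {g : G} {x : ℝ} (hx : x ∈ wordNormSet gen ℓ g) :
    0 ≤ x := by
  obtain ⟨l, -, rfl⟩ := hx
  apply List.sum_nonneg
  simp only [List.mem_map]
  rintro _ ⟨p, -, rfl⟩
  exact hℓ _

lemma wordNorm_le (hℓ : ∀ i, 0 ≤ ℓ i) {g : G} {x : ℝ} (hx : x ∈ wordNormSet gen ℓ g) :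
    wordNorm gen ℓ g ≤ x :=
  csInf_le ⟨0, fun _ hy => wordNormSet_nonneg_s12 hℓ hy⟩ hx

lemma wordNormSet_pow (i : I) (n : ℕ) : (n : ℝ) * ℓ i ∈ wordNormSet gen ℓ (gen i ^ n) := by
  induction n with
  | zero => simpa using wordNormSet_one
  | succ n ih =>
    convert wordNormSet_mul ih (wordNormSet_gen i) using 1
    · rw [pow_succ]
    · push_cast; ring

lemma wordNormSet_zpow (i : I) (n : ℤ) : |(n : ℝ)| * ℓ i ∈ wordNormSet gen ℓ (gen i ^ n) := by
  obtain ⟨m, rfl | rfl⟩ := n.eq_nat_or_neg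
  · simpa using wordNormSet_pow i m
  · simpa using wordNormSet_inv (wordNormSet_pow (ℓ := ℓ) (gen := gen) i m)

end WordNormSet

/-! ### Rounding and generators -/

lemma abs_myfloor_le (x : ℝ) : |(myfloor x : ℝ)| ≤ |x| := by
  unfold myfloor
  split_ifs with h
  · rw [abs_of_nonneg h, abs_of_nonneg (by exact_mod_cast Int.floor_nonneg.2 h)]
    exact Int.floor_le x
  · push Not at h
    have h0 : ((⌈x⌉ : ℤ) : ℝ) ≤ 0 := by
      exact_mod_cast Int.ceil_le.2 (by simpa using h.le)
    rw [abs_of_neg h, abs_of_nonpos h0]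
    linarith [Int.le_ceil x]

lemma abs_sub_myfloor_le (x : ℝ) : |x - myfloor x| ≤ 1 := by
  unfold myfloor
  rw [abs_le]
  split_ifs with h
  · constructor <;> linarith [Int.floor_le x, Int.lt_floor_add_one x]
  · constructor <;> linarith [Int.le_ceil x, Int.ceil_lt_add_one x]

lemma abs_myfloor_add_le (x y : ℝ) :
    |((myfloor x + myfloor y - myfloor (x + y) : ℤ) : ℝ)| ≤ 3 := by
  have h1 := abs_le.1 (abs_sub_myfloor_le x)
  have h2 := abs_le.1 (abs_sub_myfloor_le y)
  have h3 := abs_le.1 (abs_sub_myfloor_le (x + y))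
  push_cast
  rw [abs_le]
  constructor <;> linarith [h1.1, h1.2, h2.1, h2.2, h3.1, h3.2]

lemma genFR_mul {A : Type*} (a : A) (r s : ℝ) :
    genFR A (a, r) * genFR A (a, s) = genFR A (a, r + s) := by
  simp [genFR, ← map_mul, ofAdd_add]

lemma genFR_inv {A : Type*} (a : A) (r : ℝ) : (genFR A (a, r))⁻¹ = genFR A (a, -r) := by
  simp [genFR, ← map_inv, ofAdd_neg]

lemma genFR_zpow {A : Type*} (a : A) (r : ℝ) (n : ℤ) :
    genFR A (a, r) ^ n = genFR A (a, n * r) := by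
  simp only [genFR, ← map_zpow, ← ofAdd_zsmul, zsmul_eq_mul]

lemma wordNormSet_wordProd_nonempty {A : Type*} (μ : A → ℝ) (l : List (A × ℝ)) :
    (wordNormSet (genFR A) (fun p => |p.2| * μ p.1) (wordProd l)).Nonempty := by
  induction l with
  | nil => exact ⟨0, by simpa [wordProd] using wordNormSet_one⟩
  | cons p l ih =>
    obtain ⟨y, hy⟩ := ih
    exact ⟨_, by simpa [wordProd] using wordNormSet_mul (wordNormSet_gen p) hy⟩

lemma wordNormSet_truncFG_nonempty {A : Type*} (μ : A → ℝ) (l : List (A × ℝ)) (t : ℝ) :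
    (wordNormSet FreeGroup.of μ (truncFG l t)).Nonempty := by
  induction l with
  | nil => exact ⟨0, by simpa [truncFG] using wordNormSet_one⟩
  | cons p l ih =>
    obtain ⟨y, hy⟩ := ih
    exact ⟨_, by simpa [truncFG] using wordNormSet_mul (wordNormSet_zpow p.1 (myfloor (t * p.2))) hy⟩

/-! ### Lower bound -/

/-- The homomorphism `F(A) → F_ℝ(A)` sending `a` to `a(1/t)`. -/
noncomputable def rescale (A : Type*) (t : ℝ) : FreeGroup A →* FR A :=
  FreeGroup.lift fun a => genFR A (a, 1 / t)

lemma rescale_mem {A : Type*} {μ : A → ℝ} {t : ℝ} (ht : 0 < t) {g : FreeGroup A} {x : ℝ}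
    (hx : x ∈ wordNormSet FreeGroup.of μ g) :
    x / t ∈ wordNormSet (genFR A) (fun p => |p.2| * μ p.1) (rescale A t g) := by
  obtain ⟨l, rfl, rfl⟩ := hx
  induction l with
  | nil => simpa using wordNormSet_one
  | cons p l ih =>
    have h1 : μ p.2.1 / t ∈ wordNormSet (genFR A) (fun p => |p.2| * μ p.1)
        (rescale A t (p.1 * (if p.2.2 then FreeGroup.of p.2.1 else (FreeGroup.of p.2.1)⁻¹)
          * p.1⁻¹)) := by
      refine ⟨[(rescale A t p.1, (p.2.1, 1 / t), p.2.2)], ?_, ?_⟩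
      · cases p.2.2 <;> simp [rescale]
      · simp [abs_of_pos ht, div_eq_inv_mul]
    have h2 := wordNormSet_mul h1 ih
    rw [← map_mul, ← add_div] at h2
    simpa only [List.map_cons, List.prod_cons, List.sum_cons] using h2

/-- The rescaled truncation `∏ aᵢ(⟦t rᵢ⟧/t)` is at distance `O(1/t)` from `w`. -/
lemma rescale_trunc_near {A : Type*} (μ : A → ℝ) (hμ : ∀ a, 0 ≤ μ a) (l : List (A × ℝ)) :
    ∃ K : ℝ, ∀ t : ℝ, 0 < t → ∃ y ∈ wordNormSet (genFR A) (fun p => |p.2| * μ p.1)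
      ((rescale A t (truncFG l t))⁻¹ * wordProd l), y ≤ K / t := by
  induction l with
  | nil => exact ⟨0, fun t _ => ⟨0, by simpa [truncFG, wordProd] using wordNormSet_one, by simp⟩⟩
  | cons p l ih =>
    obtain ⟨a, r⟩ := p
    obtain ⟨K, hK⟩ := ih
    refine ⟨μ a + K, fun t ht => ?_⟩
    obtain ⟨y, hy, hyK⟩ := hK t ht
    have h1 := wordNormSet_conj (rescale A t (truncFG l t))⁻¹
      (wordNormSet_gen (gen := genFR A) (ℓ := fun p => |p.2| * μ p.1)
        (a, -(myfloor (t * r) * (1 / t)) + r))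
    refine ⟨|-(myfloor (t * r) * (1 / t)) + r| * μ a + y, ?_, ?_⟩
    · convert wordNormSet_mul h1 hy using 1
      have hr : rescale A t (truncFG ((a, r) :: l) t)
          = genFR A (a, myfloor (t * r) * (1 / t)) * rescale A t (truncFG l t) := by
        rw [← genFR_zpow]; simp [truncFG, rescale]
      have hw : wordProd ((a, r) :: l) = genFR A (a, r) * wordProd l := by simp [wordProd]
      rw [hr, hw, ← genFR_mul, ← genFR_inv]
      group
    · rw [add_div]
      refine add_le_add ?_ hyK
      have h2 : -(myfloor (t * r) * (1 / t)) + r = (t * r - myfloor (t * r)) / t := by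
        field_simp; ring
      simp only [h2]
      rw [abs_div, abs_of_pos ht, div_mul_eq_mul_div]
      gcongr
      exact mul_le_of_le_one_left (hμ a) (abs_sub_myfloor_le _)

/-! ### Upper bound -/

/-- The functions `ℝ → F(A)` of bounded norm. The bound is stated through lengths of expressions,
so that it also asserts that `wordNormSet` is nonempty. -/
def boundedSubgroup {A : Type*} (μ : A → ℝ) : Subgroup (ℝ → FreeGroup A) where
  carrier := {f | ∃ C : ℝ, ∀ t, ∃ x ∈ wordNormSet FreeGroup.of μ (f t), x ≤ C}
  one_mem' := ⟨0, fun _ => ⟨0, wordNormSet_one, le_rfl⟩⟩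
  mul_mem' := by
    rintro f g ⟨C, hC⟩ ⟨D, hD⟩
    refine ⟨C + D, fun t => ?_⟩
    obtain ⟨x, hx, hxC⟩ := hC t
    obtain ⟨y, hy, hyD⟩ := hD t
    exact ⟨x + y, wordNormSet_mul hx hy, add_le_add hxC hyD⟩
  inv_mem' := by
    rintro f ⟨C, hC⟩
    refine ⟨C, fun t => ?_⟩
    obtain ⟨x, hx, hxC⟩ := hC t
    exact ⟨x, wordNormSet_inv hx, hxC⟩

instance boundedSubgroup_normal {A : Type*} (μ : A → ℝ) : (boundedSubgroup μ).Normal where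
  conj_mem := by
    rintro f ⟨C, hC⟩ g
    refine ⟨C, fun t => ?_⟩
    obtain ⟨x, hx, hxC⟩ := hC t
    exact ⟨x, wordNormSet_conj (g t) hx, hxC⟩

/-- The homomorphism from `F_ℝ(A)` to functions `ℝ → F(A)` modulo bounded ones, sending `a(r)` to
the class of `t ↦ a^⟦t r⟧`. -/
noncomputable def asympHom {A : Type*} (μ : A → ℝ) (hμ : ∀ a, 0 ≤ μ a) :
    FR A →* (ℝ → FreeGroup A) ⧸ boundedSubgroup μ :=
  Monoid.CoprodI.lift fun a => MonoidHom.mk'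
    (fun r : Multiplicative ℝ => QuotientGroup.mk
      (s := boundedSubgroup μ) fun t : ℝ => FreeGroup.of a ^ myfloor (t * r.toAdd)) (by
    intro r s
    rw [← QuotientGroup.mk_mul, QuotientGroup.eq]
    refine ⟨3 * μ a, fun t => ⟨_, ?_, mul_le_mul_of_nonneg_right
      (abs_myfloor_add_le (t * r.toAdd) (t * s.toAdd)) (hμ a)⟩⟩
    convert wordNormSet_zpow (gen := FreeGroup.of) (ℓ := μ) a _ using 1
    simp only [Pi.mul_apply, Pi.inv_apply, toAdd_mul, mul_add, ← zpow_neg, ← zpow_add]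
    congr 2
    ring)

lemma asympHom_genFR {A : Type*} (μ : A → ℝ) (hμ : ∀ a, 0 ≤ μ a) (p : A × ℝ) :
    asympHom μ hμ (genFR A p) = QuotientGroup.mk
      (s := boundedSubgroup μ) fun t : ℝ => FreeGroup.of p.1 ^ myfloor (t * p.2) := by
  simp [asympHom, genFR]

lemma asympHom_wordProd {A : Type*} (μ : A → ℝ) (hμ : ∀ a, 0 ≤ μ a) (l : List (A × ℝ)) :
    asympHom μ hμ (wordProd l) = QuotientGroup.mk (s := boundedSubgroup μ) (truncFG l) := by
  induction l with
  | nil => rfl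
  | cons p l ih =>
    have h : wordProd (p :: l) = genFR A p * wordProd l := by simp [wordProd]
    rw [h, map_mul, ih, asympHom_genFR, ← QuotientGroup.mk_mul]
    rfl

/-- An expression of `w` of total length `x` gives a representative of `asympHom w` whose
norm at `t ≥ 0` is at most `t x`. -/
lemma exists_rep_of_mem {A : Type*} (μ : A → ℝ) (hμ : ∀ a, 0 ≤ μ a) {w : FR A} {x : ℝ}
    (hx : x ∈ wordNormSet (genFR A) (fun p => |p.2| * μ p.1) w) :
    ∃ f : ℝ → FreeGroup A, QuotientGroup.mk (s := boundedSubgroup μ) f = asympHom μ hμ w ∧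
      ∀ t, 0 ≤ t → ∃ y ∈ wordNormSet FreeGroup.of μ (f t), y ≤ t * x := by
  obtain ⟨l, rfl, rfl⟩ := hx
  induction l with
  | nil => exact ⟨1, by simp, fun t _ => ⟨0, wordNormSet_one, by simp⟩⟩
  | cons p l ih =>
    obtain ⟨f, hf, hfb⟩ := ih
    obtain ⟨g, ⟨a, r⟩, b⟩ := p
    obtain ⟨h, hh⟩ := QuotientGroup.mk_surjective (asympHom μ hμ g)
    -- `c` represents the generator `a(r)^{±1}` of the first factor.
    obtain ⟨c, hc, hcb⟩ : ∃ c : ℝ → FreeGroup A,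
        QuotientGroup.mk (s := boundedSubgroup μ) c
          = asympHom μ hμ (if b then genFR A (a, r) else (genFR A (a, r))⁻¹) ∧
        ∀ t, |(myfloor (t * r) : ℝ)| * μ a ∈ wordNormSet FreeGroup.of μ (c t) := by
      cases b
      · exact ⟨(fun t => FreeGroup.of a ^ myfloor (t * r))⁻¹, by simp [asympHom_genFR],
          fun t => wordNormSet_inv (wordNormSet_zpow a _)⟩
      · exact ⟨fun t => FreeGroup.of a ^ myfloor (t * r), by simp [asympHom_genFR],
          fun t => wordNormSet_zpow a _⟩
    refine ⟨h * c * h⁻¹ * f, ?_, fun t ht => ?_⟩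
    · simp only [List.map_cons, List.prod_cons, map_mul, map_inv, QuotientGroup.mk_mul,
        QuotientGroup.mk_inv, hh, hc, hf]
    · obtain ⟨y, hy, hyt⟩ := hfb t ht
      refine ⟨_, wordNormSet_mul (wordNormSet_conj (h t) (hcb t)) hy, ?_⟩
      simp only [List.map_cons, List.sum_cons, mul_add]
      refine add_le_add ?_ hyt
      rw [← mul_assoc]
      refine mul_le_mul_of_nonneg_right ?_ (hμ a)
      simpa [abs_mul, abs_of_nonneg ht] using abs_myfloor_le (t * r)

/-- for any `w ∈ F_ℝ(A)` and any word `𝐰` representing it,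
`‖w‖_{F_ℝ(A;μ)} = lim_{t→∞} (1/t)·‖𝐰[t]‖_{F(A;μ)}`. -/
theorem FRnorm_eq_lim_scaledTruncNorm
    {A : Type*} (μ : A → ℝ) (hμ : ∀ a, 0 ≤ μ a) (l : List (A × ℝ)) :
    Tendsto (fun t : ℝ => (1 / t) * wordNorm FreeGroup.of μ (truncFG l t))
      atTop (nhds (FRnorm μ (wordProd l))) := by
  have hℓ : ∀ p : A × ℝ, 0 ≤ |p.2| * μ p.1 := fun p => mul_nonneg (abs_nonneg _) (hμ _)
  have hdiv : ∀ C : ℝ, Tendsto (fun t : ℝ => C / t) atTop (nhds 0) := fun C =>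
    tendsto_const_nhds.div_atTop tendsto_id
  refine tendsto_order.2 ⟨fun b hb => ?_, fun b hb => ?_⟩
  · obtain ⟨K, hK⟩ := rescale_trunc_near μ hμ l
    filter_upwards [eventually_gt_atTop 0, (hdiv K).eventually_lt_const (sub_pos.2 hb)]
      with t ht hKt
    obtain ⟨y, hy, hyK⟩ := hK t ht
    have key : t * (FRnorm μ (wordProd l) - y) ≤ wordNorm FreeGroup.of μ (truncFG l t) := by
      refine le_csInf (wordNormSet_truncFG_nonempty μ l t) fun x hx => ?_
      have h1 := wordNormSet_mul (rescale_mem ht hx) hy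
      rw [mul_inv_cancel_left] at h1
      have h2 : FRnorm μ (wordProd l) ≤ x / t + y := wordNorm_le hℓ h1
      have h3 : FRnorm μ (wordProd l) - y ≤ x / t := by linarith
      rwa [le_div_iff₀ ht, mul_comm] at h3
    have h4 : FRnorm μ (wordProd l) - y ≤ 1 / t * wordNorm FreeGroup.of μ (truncFG l t) := by
      rw [one_div_mul_eq_div, le_div_iff₀ ht, mul_comm]
      exact key
    linarith
  · obtain ⟨x, hx, hxb⟩ := exists_lt_of_csInf_lt (wordNormSet_wordProd_nonempty μ l) hb
    obtain ⟨f, hf, hfb⟩ := exists_rep_of_mem μ hμ hx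
    rw [asympHom_wordProd, QuotientGroup.eq] at hf
    obtain ⟨C, hC⟩ := hf
    filter_upwards [eventually_gt_atTop 0, (hdiv C).eventually_lt_const (sub_pos.2 hxb)]
      with t ht hCt
    obtain ⟨y, hy, hyt⟩ := hfb t ht.le
    obtain ⟨z, hz, hzC⟩ := hC t
    have h1 := wordNormSet_mul hy hz
    simp only [Pi.mul_apply, Pi.inv_apply, mul_inv_cancel_left] at h1
    have h2 : wordNorm FreeGroup.of μ (truncFG l t) ≤ t * x + C := by
      linarith [wordNorm_le hμ h1]
    have h3 : 1 / t * wordNorm FreeGroup.of μ (truncFG l t) ≤ x + C / t := by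
      rw [one_div_mul_eq_div, div_le_iff₀ ht, add_mul, div_mul_cancel₀ _ ht.ne']
      linarith
    linarith
end
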